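/- arXiv:2112.02545 — 2 statements merged into one kernel-verified Lean document; each statement's English description precedes it below -/
import Mathlib

section
/- For every j with 1 ≤ j ≤ N − 1, the j-th elementary symmetric polynomial e_j(cot θ_1, cot θ_2, …, cot θ_N) of the cotangents of the interior angles does not depend on t: writing θ_k(t) for the interior angle at w_k when the parameter is t, for all real t and t′ one has e_j(cot θ_1(t), …, cot θ_N(t)) = e_j(cot θ_1(t′), …, cot θ_N(t′)). -/
open Real Finset

open ComplexConjugate Polynomial

/-! For `‖d‖ ≠ 1` the involution `z ↦ (d - z) / (1 - conj d * z)` carries the regular polygon to the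
harmonic one. It shows that the cotangent of the interior angle at the image of `z` is an affine
function of `2 * Re (conj d * z)`, with coefficients depending only on `d` and on the step of the
polygon. The numbers `2 * Re (ζ ^ k * u)`, where `ζ` is a primitive `N`-th root of unity, are the
roots of the Dickson polynomial with parameter `‖u‖ ^ 2` shifted by the constant `2 * Re (u ^ N)`.
Rotating `u` changes this polynomial, as well as its image under an affine substitution, only in the
constant term, hence only the top elementary symmetric function. -/

section ElementarySymmetric

variable {R ι : Type*} [CommRing R] (s : Finset ι)

lemma prod_X_add_C_sub_eq_comp (f : ι → R) (b : R) :
    ∏ i ∈ s, (X + C (f i - b)) = (-1) ^ #s * (∏ i ∈ s, (X - C (f i))).comp (C b - X) := by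
  rw [Polynomial.prod_comp, ← prod_const, ← prod_mul_distrib]
  refine prod_congr rfl fun i _ ↦ ?_
  simp only [sub_comp, X_comp, C_comp, C_sub]
  ring

lemma sum_powersetCard_prod_const_mul (a : R) (f : ι → R) (j : ℕ) :
    ∑ A ∈ s.powersetCard j, ∏ i ∈ A, a * f i = a ^ j * ∑ A ∈ s.powersetCard j, ∏ i ∈ A, f i := by
  simpa only [Multiset.map_map, Function.comp_def, smul_eq_mul, Finset.esymm_map_val] using
    (Multiset.pow_smul_esymm a j (s.val.map f)).symm

variable {s}

lemma sum_powersetCard_prod_sub_eq {f g : ι → R} {c : R}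
    (h : ∏ i ∈ s, (X - C (f i)) = ∏ i ∈ s, (X - C (g i)) + C c) (b : R) {j : ℕ} (hj : j < #s) :
    ∑ A ∈ s.powersetCard j, ∏ i ∈ A, (f i - b) = ∑ A ∈ s.powersetCard j, ∏ i ∈ A, (g i - b) := by
  have hshift : ∏ i ∈ s, (X + C (f i - b)) = ∏ i ∈ s, (X + C (g i - b)) + C ((-1) ^ #s * c) := by
    simp only [prod_X_add_C_sub_eq_comp, h, add_comp, C_comp, mul_add, C_mul, C_pow, C_neg, C_1]
  have hcoeff := congrArg (fun p ↦ p.coeff (#s - j)) hshift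
  simpa only [coeff_add, coeff_C_of_ne_zero (Nat.sub_ne_zero_of_lt hj), add_zero,
    Finset.prod_X_add_C_coeff _ _ (Nat.sub_le _ _), Nat.sub_sub_self hj.le] using hcoeff

end ElementarySymmetric

section Dickson

lemma dickson_one_eval_add {R : Type*} [CommRing R] (x y : R) :
    ∀ n : ℕ, (dickson 1 (x * y) n).eval (x + y) = x ^ n + y ^ n
  | 0 => by
    simp only [dickson_zero, eval_sub, eval_ofNat, Nat.cast_one, eval_one, pow_zero]
    norm_num
  | 1 => by simp only [dickson_one, eval_X, pow_one]
  | n + 2 => by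
    simp only [dickson_add_two, eval_sub, eval_mul, eval_X, eval_C, dickson_one_eval_add x y n,
      dickson_one_eval_add x y (n + 1)]
    ring

variable {K : Type*} [Field K] {ζ : K} {N : ℕ}

lemma prod_sub_zpow_mul (hζ : IsPrimitiveRoot ζ N) (hN : 0 < N) (x y : K) :
    ∏ k ∈ Icc (1 : ℤ) N, (x - ζ ^ k * y) = x ^ N - y ^ N := by
  rw [hζ.pow_sub_pow_eq_prod_sub_mul _ _ hN]
  have hmaps : Set.MapsTo (fun k : ℤ ↦ ζ ^ k) (Icc (1 : ℤ) N) (nthRootsFinset N (1 : K)) := by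
    intro k _
    rw [mem_coe, mem_nthRootsFinset hN, ← zpow_natCast, zpow_comm, zpow_natCast, hζ.pow_eq_one,
      one_zpow]
  have hinj : Set.InjOn (fun k : ℤ ↦ ζ ^ k) (Icc (1 : ℤ) N) := by
    intro k hk l hl hkl
    have hdvd : (N : ℤ) ∣ k - l := by
      rw [← hζ.zpow_eq_one_iff_dvd, zpow_sub₀ (hζ.ne_zero hN.ne')]
      exact (div_eq_one_iff_eq (zpow_ne_zero _ (hζ.ne_zero hN.ne'))).2 hkl
    rw [mem_coe, mem_Icc] at hk hl
    exact sub_eq_zero.1 (Int.eq_zero_of_abs_lt_dvd hdvd (by grind))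
  refine prod_nbij _ hmaps hinj (surjOn_of_injOn_of_card_le _ hmaps hinj ?_) fun _ _ ↦ rfl
  rw [hζ.card_nthRootsFinset, Int.card_Icc, add_sub_cancel_right, Int.toNat_natCast]

lemma exists_add_eq_mul_eq_of_ne_zero [IsAlgClosed K] {x : K} (hx : x ≠ 0) (a : K) :
    ∃ p q : K, p ≠ 0 ∧ p + q = x ∧ p * q = a := by
  have hdeg : (X ^ 2 - C x * X + C a).degree = 2 := by compute_degree!
  obtain ⟨p, hp⟩ := IsAlgClosed.exists_root _ (hdeg.trans_ne two_ne_zero)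
  have hpa : p * (x - p) = a := by
    simp only [IsRoot, eval_add, eval_sub, eval_mul, eval_pow, eval_X, eval_C] at hp
    linear_combination -hp
  by_cases hp0 : p = 0
  · exact ⟨x, 0, hx, add_zero x, by simpa [hp0] using hpa⟩
  · exact ⟨p, x - p, hp0, add_sub_cancel p x, hpa⟩

lemma prod_X_sub_C_zpow_mul_add [IsAlgClosed K] (hζ : IsPrimitiveRoot ζ N) (hN : 0 < N) (u v : K) :
    ∏ k ∈ Icc (1 : ℤ) N, (X - C (ζ ^ k * u + ζ⁻¹ ^ k * v)) =
      dickson 1 (u * v) N - C (u ^ N + v ^ N) := by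
  refine eq_of_infinite_eval_eq _ _ ((Set.finite_singleton (0 : K)).infinite_compl.mono ?_)
  intro x hx
  obtain ⟨p, q, hp, rfl, hpq⟩ := exists_add_eq_mul_eq_of_ne_zero hx (u * v)
  have hfactor (k : ℤ) :
      p * (p + q - (ζ ^ k * u + ζ⁻¹ ^ k * v)) = (p - ζ ^ k * u) * (p - ζ⁻¹ ^ k * v) := by
    have hk : ζ ^ k * ζ⁻¹ ^ k = 1 := by
      rw [← mul_zpow, mul_inv_cancel₀ (hζ.ne_zero hN.ne'), one_zpow]
    linear_combination hpq - u * v * hk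
  have hprod : p ^ N * ∏ k ∈ Icc (1 : ℤ) N, (p + q - (ζ ^ k * u + ζ⁻¹ ^ k * v)) =
      (p ^ N - u ^ N) * (p ^ N - v ^ N) := by
    have hcard : #(Icc (1 : ℤ) N) = N := by simp
    rw [← prod_sub_zpow_mul hζ hN, ← prod_sub_zpow_mul hζ.inv hN, ← prod_mul_distrib]
    simp only [← hfactor, prod_mul_distrib, prod_const, hcard]
  have hpqN : p ^ N * q ^ N = u ^ N * v ^ N := by rw [← mul_pow, hpq, mul_pow]
  simp only [Set.mem_ofPred_eq, eval_prod, eval_sub, eval_X, eval_C, ← hpq, dickson_one_eval_add]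
  refine mul_left_cancel₀ (pow_ne_zero N hp) ?_
  linear_combination hprod - hpqN

lemma prod_X_sub_C_two_mul_re {ζ : ℂ} (hζ : IsPrimitiveRoot ζ N) (hN : 0 < N) (u : ℂ) :
    ∏ k ∈ Icc (1 : ℤ) N, (X - C (2 * (ζ ^ k * u).re)) =
      dickson 1 (Complex.normSq u) N - C (2 * (u ^ N).re) := by
  have hconj : conj ζ = ζ⁻¹ := (Complex.inv_eq_conj (hζ.norm'_eq_one hN.ne')).symm
  apply Polynomial.map_injective Complex.ofRealHom Complex.ofReal_injective
  have htwo_re (k : ℤ) : ((2 * (ζ ^ k * u).re : ℝ) : ℂ) = ζ ^ k * u + ζ⁻¹ ^ k * conj u := by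
    rw [← Complex.add_conj, map_mul, map_zpow₀, hconj]
  simp only [Polynomial.map_prod, Polynomial.map_sub, map_X, map_C, map_dickson,
    Complex.ofRealHom_eq_coe, htwo_re]
  rw [prod_X_sub_C_zpow_mul_add hζ hN, Complex.mul_conj, ← map_pow, Complex.add_conj]

end Dickson

-- If `x` or `y` is `0`, then the angle is `π / 2` by convention and both sides vanish.
lemma cot_angle_eq_re_div_abs_im (x y : ℂ) :
    Real.cot (InnerProductGeometry.angle x y) = (x / y).re / |(x / y).im| := by
  rcases eq_or_ne x 0 with rfl | hx
  · simp [Real.cot_eq_cos_div_sin]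
  rcases eq_or_ne y 0 with rfl | hy
  · simp [Real.cot_eq_cos_div_sin]
  have hxy : x / y ≠ 0 := div_ne_zero hx hy
  have hsin : Real.sin |(x / y).arg| = |(x / y).im| / ‖x / y‖ := by
    rw [← abs_sin_eq_sin_abs_of_abs_le_pi (Complex.abs_arg_le_pi _), Complex.sin_arg, abs_div,
      abs_norm]
  rw [Complex.angle_eq_abs_arg hx hy, Real.cot_eq_cos_div_sin, hsin, Real.cos_abs,
    Complex.cos_arg hxy, div_div_div_cancel_right₀ (norm_ne_zero_iff.2 hxy)]

section HarmonicPolygon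

/-- The second intersection with the unit circle of the line through `d` and the point `z` of the
unit circle, for `d` off the circle; it is `z` itself when the line is tangent. -/
noncomputable def secondIntersection (d z : ℂ) : ℂ := (d * conj z - 1) / (conj z - conj d)

/-- The interior angle at the `k`-th vertex of the harmonic polygon obtained by projecting the
regular polygon with vertices `ζ ^ k * u` through `d`; here `ζ` is a root of unity and `u` a point
of the unit circle. -/
noncomputable def harmonicAngle (d ζ u : ℂ) (k : ℤ) : ℝ :=
  EuclideanGeometry.angle (secondIntersection d (ζ ^ (k - 1) * u))
    (secondIntersection d (ζ ^ k * u)) (secondIntersection d (ζ ^ (k + 1) * u))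

variable {d q x y z : ℂ}

lemma one_sub_conj_mul_ne_zero (hd : ‖d‖ ≠ 1) (hz : ‖z‖ = 1) : 1 - conj d * z ≠ 0 := by
  intro h
  apply hd
  simpa [hz] using (congrArg norm (sub_eq_zero.1 h)).symm

lemma secondIntersection_eq (d : ℂ) (hz : ‖z‖ = 1) :
    secondIntersection d z = (d - z) / (1 - conj d * z) := by
  have hz0 : z ≠ 0 := norm_ne_zero_iff.1 (hz ▸ one_ne_zero)
  rw [secondIntersection, ← Complex.inv_eq_conj hz, ← mul_div_mul_right _ _ hz0, sub_mul, sub_mul,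
    mul_assoc, inv_mul_cancel₀ hz0, mul_one, one_mul]

lemma secondIntersection_sub (hd : ‖d‖ ≠ 1) (hx : ‖x‖ = 1) (hy : ‖y‖ = 1) :
    secondIntersection d x - secondIntersection d y =
      (1 - d * conj d) * (y - x) / ((1 - conj d * x) * (1 - conj d * y)) := by
  rw [secondIntersection_eq d hx, secondIntersection_eq d hy,
    div_sub_div _ _ (one_sub_conj_mul_ne_zero hd hx) (one_sub_conj_mul_ne_zero hd hy)]
  ring

lemma secondIntersection_sub_div_sub (hd : ‖d‖ ≠ 1) (hz : ‖z‖ = 1) (hq : ‖q‖ = 1) (hq1 : q ≠ 1) :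
    (secondIntersection d (q⁻¹ * z) - secondIntersection d z) /
        (secondIntersection d (q * z) - secondIntersection d z) =
      -q⁻¹ * (1 - conj d * (q * z)) / (1 - conj d * (q⁻¹ * z)) := by
  have hqz : ‖q * z‖ = 1 := by rw [norm_mul, hq, hz, one_mul]
  have hqz' : ‖q⁻¹ * z‖ = 1 := by rw [norm_mul, norm_inv, hq, hz, inv_one, one_mul]
  have hz0 : z ≠ 0 := norm_ne_zero_iff.1 (hz ▸ one_ne_zero)
  have hq0 : q ≠ 0 := norm_ne_zero_iff.1 (hq ▸ one_ne_zero)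
  have hdd : 1 - d * conj d ≠ 0 := by
    rw [Complex.mul_conj', sub_ne_zero]
    exact_mod_cast mt (pow_eq_one_iff_of_nonneg (norm_nonneg d) two_ne_zero).1 hd ∘ Eq.symm
  have hdz := one_sub_conj_mul_ne_zero hd hz
  have hdqz' := one_sub_conj_mul_ne_zero hd hqz'
  have hzqz : z - q * z ≠ 0 := by
    rw [← one_sub_mul]
    exact mul_ne_zero (sub_ne_zero.2 hq1.symm) hz0
  have hsub : z - q⁻¹ * z = -q⁻¹ * (z - q * z) := by
    field_simp
    ring
  rw [secondIntersection_sub hd hqz' hz, secondIntersection_sub hd hqz hz, hsub, div_div_div_eq,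
    div_eq_div_iff (mul_ne_zero (mul_ne_zero hdqz' hdz) (mul_ne_zero hdd hzqz)) hdqz']
  ring

lemma secondIntersection_sub_div_sub_eq_div_normSq (hd : ‖d‖ ≠ 1) (hz : ‖z‖ = 1) (hq : ‖q‖ = 1)
    (hq1 : q ≠ 1) :
    (secondIntersection d (q⁻¹ * z) - secondIntersection d z) /
        (secondIntersection d (q * z) - secondIntersection d z) =
      (conj d * z + conj (conj d * z) - conj q - d * conj d * q) /
        Complex.normSq (1 - conj d * (q⁻¹ * z)) := by
  have hz0 : z ≠ 0 := norm_ne_zero_iff.1 (hz ▸ one_ne_zero)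
  have hq0 : q ≠ 0 := norm_ne_zero_iff.1 (hq ▸ one_ne_zero)
  have hdqz' : 1 - conj d * (q⁻¹ * z) ≠ 0 := one_sub_conj_mul_ne_zero hd (by simp [hq, hz])
  rw [secondIntersection_sub_div_sub hd hz hq hq1, Complex.normSq_eq_conj_mul_self,
    ← mul_div_mul_left _ _ ((_root_.map_ne_zero conj).2 hdqz')]
  simp only [map_sub, map_one, map_mul, map_inv₀, Complex.conj_conj, ← Complex.inv_eq_conj hq,
    ← Complex.inv_eq_conj hz, inv_inv]
  congr 1
  field_simp
  ring

lemma cot_angle_secondIntersection (hd : ‖d‖ ≠ 1) (hz : ‖z‖ = 1) (hq : ‖q‖ = 1) (hq1 : q ≠ 1) :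
    Real.cot (EuclideanGeometry.angle (secondIntersection d (q⁻¹ * z)) (secondIntersection d z)
        (secondIntersection d (q * z))) =
      |(1 - ‖d‖ ^ 2) * q.im|⁻¹ * (2 * (conj d * z).re - (1 + ‖d‖ ^ 2) * q.re) := by
  have hn : 0 < Complex.normSq (1 - conj d * (q⁻¹ * z)) :=
    Complex.normSq_pos.2 (one_sub_conj_mul_ne_zero hd (by simp [hq, hz]))
  rw [EuclideanGeometry.angle, cot_angle_eq_re_div_abs_im, vsub_eq_sub, vsub_eq_sub,
    secondIntersection_sub_div_sub_eq_div_normSq hd hz hq hq1, Complex.div_ofReal_re,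
    Complex.div_ofReal_im, abs_div, abs_of_pos hn, div_div_div_cancel_right₀ hn.ne',
    Complex.mul_conj', Complex.add_conj, inv_mul_eq_div, ← Complex.ofReal_pow]
  congr 2
  · simp only [Complex.sub_re, Complex.ofReal_re, Complex.conj_re, Complex.re_ofReal_mul]
    ring
  · simp only [Complex.sub_im, Complex.ofReal_im, Complex.conj_im, Complex.im_ofReal_mul]
    ring

lemma cot_harmonicAngle {N : ℕ} (hN : 1 < N) {ζ u : ℂ} (hζ : IsPrimitiveRoot ζ N) (hd : ‖d‖ ≠ 1)
    (hu : ‖u‖ = 1) (k : ℤ) :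
    Real.cot (harmonicAngle d ζ u k) =
      |(1 - ‖d‖ ^ 2) * ζ.im|⁻¹ * (2 * (ζ ^ k * (conj d * u)).re - (1 + ‖d‖ ^ 2) * ζ.re) := by
  have hζ0 : ζ ≠ 0 := hζ.ne_zero (by lia)
  have hζnorm : ‖ζ‖ = 1 := hζ.norm'_eq_one (by lia)
  have hz : ‖ζ ^ k * u‖ = 1 := by rw [norm_mul, norm_zpow, hζnorm, one_zpow, hu, one_mul]
  rw [harmonicAngle, zpow_sub_one₀ hζ0, zpow_add_one₀ hζ0, mul_comm (ζ ^ k) ζ⁻¹, mul_comm (ζ ^ k) ζ,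
    mul_assoc, mul_assoc, cot_angle_secondIntersection hd hz hζnorm (hζ.ne_one hN),
    mul_left_comm (ζ ^ k)]

end HarmonicPolygon

theorem esymm_cot_invariant_general {N : ℕ} (hN : 3 ≤ N) {ζ : ℂ} (hζ : IsPrimitiveRoot ζ N) {d : ℂ}
    (hd : ‖d‖ ≠ 1) {j : ℕ} (hj : j < N) {u u' : ℂ} (hu : ‖u‖ = 1) (hu' : ‖u'‖ = 1) :
    ∑ A ∈ (Icc (1 : ℤ) N).powersetCard j, ∏ k ∈ A, Real.cot (harmonicAngle d ζ u k) =
      ∑ A ∈ (Icc (1 : ℤ) N).powersetCard j, ∏ k ∈ A, Real.cot (harmonicAngle d ζ u' k) := by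
  have hdickson {v : ℂ} (hv : ‖v‖ = 1) :
      ∏ k ∈ Icc (1 : ℤ) N, (X - C (2 * (ζ ^ k * (conj d * v)).re)) =
        dickson 1 (‖d‖ ^ 2) N - C (2 * ((conj d * v) ^ N).re) := by
    rw [prod_X_sub_C_two_mul_re hζ (by lia), Complex.normSq_eq_norm_sq, norm_mul, Complex.norm_conj,
      hv, mul_one]
  have hconst : ∏ k ∈ Icc (1 : ℤ) N, (X - C (2 * (ζ ^ k * (conj d * u)).re)) =
      ∏ k ∈ Icc (1 : ℤ) N, (X - C (2 * (ζ ^ k * (conj d * u')).re)) +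
        C (2 * ((conj d * u') ^ N).re - 2 * ((conj d * u) ^ N).re) := by
    rw [hdickson hu, hdickson hu', C_sub]
    ring
  have hN1 : 1 < N := by lia
  simp only [cot_harmonicAngle hN1 hζ hd hu, cot_harmonicAngle hN1 hζ hd hu',
    sum_powersetCard_prod_const_mul]
  rw [sum_powersetCard_prod_sub_eq hconst _ (by simpa using hj)]

lemma exp_I_mul_eq_zpow_mul (N : ℕ) (t : ℝ) (k : ℤ) :
    Complex.exp (Complex.I * ((2 * (π / N) * (k : ℝ) + t : ℝ) : ℂ)) =
      Complex.exp (2 * π * Complex.I / N) ^ k * Complex.exp (t * Complex.I) := by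
  rw [← Complex.exp_int_mul, ← Complex.exp_add]
  congr 1
  push_cast
  ring

/-- For `1 ≤ j ≤ N − 1`, the `j`-th elementary symmetric polynomial of the
cotangents of the interior angles of the harmonic `N`-gon does not depend on
the Poncelet parameter `t`. -/
theorem esymm_cot_invariant (N : ℕ) (hN : 3 ≤ N) (d : ℝ) (hd : |d| < 1)
    (z w : ℝ → ℤ → ℂ) (θ : ℝ → ℤ → ℝ)
    (hz : ∀ (t : ℝ) (k : ℤ), z t k = Complex.exp (Complex.I *
      ((2 * (Real.pi / N) * (k : ℝ) + t : ℝ) : ℂ)))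
    (hw : ∀ (t : ℝ) (k : ℤ), w t k = ((d : ℂ) * (starRingEnd ℂ) (z t k) - 1) /
      ((starRingEnd ℂ) (z t k) - (d : ℂ)))
    (hθ : ∀ (t : ℝ) (k : ℤ),
      θ t k = EuclideanGeometry.angle (w t (k - 1)) (w t k) (w t (k + 1)))
    (j : ℕ) (hj1 : 1 ≤ j) (hjN : j ≤ N - 1) (t t' : ℝ) :
    ∑ A ∈ (Finset.Icc (1 : ℤ) N).powersetCard j,
        ∏ k ∈ A, Real.cos (θ t k) / Real.sin (θ t k) =
      ∑ A ∈ (Finset.Icc (1 : ℤ) N).powersetCard j,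
        ∏ k ∈ A, Real.cos (θ t' k) / Real.sin (θ t' k) := by
  have hangle (s : ℝ) (k : ℤ) : θ s k = harmonicAngle d (Complex.exp (2 * π * Complex.I / N))
      (Complex.exp (s * Complex.I)) k := by
    simp only [hθ, hw, hz, exp_I_mul_eq_zpow_mul, harmonicAngle, secondIntersection,
      Complex.conj_ofReal]
  simp only [hangle, ← Real.cot_eq_cos_div_sin]
  exact esymm_cot_invariant_general hN (Complex.isPrimitiveRoot_exp N (by lia))
    (by simpa using hd.ne) (by lia) (Complex.norm_exp_ofReal_mul_I t)
    (Complex.norm_exp_ofReal_mul_I t')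
end

section
/- For each index k let q_k be the pole of the line through v_k and v_{k+1} with respect to the unit circle centered at the focus f_h = (−c_h, 0). Then: (i) every q_k lies on the circle of center O_1 = (−c_h·(1 + b_h²)/b_h², 0) and radius R_1 = a_h/b_h², i.e., |q_k − O_1| = R_1; and (ii) with κ = √(a_h² − c_h²·cos²α), x_1 = −c_h·(a_h² + (1 − c_h²)·cos²α)/κ², a_1 = a_h·cos α/κ², b_1 = a_h·cos α/(b_h·κ), each line through q_k and q_{k+1} is tangent to the ellipse (x − x_1)²/a_1² + y²/b_1² = 1, i.e., meets it in exactly one point. -/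
open Real

/-!
Reciprocation about a point `f` swaps points and lines. It carries the tangents of an ellipse `E`
to the points of a reciprocal conic `E*`, and the points of `E` to the tangents of `E*`. When `f` is
inside `E` the conic `E*` is an ellipse, and it is a circle when `f` is a focus.

A side of the homothetic family is tangent to the inner ellipse at the midpoint parameter of its
endpoints, so its pole lies on the reciprocal of the inner ellipse, a circle. Consecutive sides
share a vertex on the outer ellipse, so the line through their poles is the polar of that vertex,
hence a tangent of the reciprocal of the outer ellipse.
-/

/-- The ellipse with centre `(x₀, 0)` and semiaxes `A`, `B` parallel to the coordinate axes. -/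
def ellipse (x₀ A B : ℝ) : Set (ℝ × ℝ) :=
  {p | (p.1 - x₀) ^ 2 / A ^ 2 + p.2 ^ 2 / B ^ 2 = 1}

/-- The standard parametrization of the ellipse with semiaxes `A`, `B` centred at the origin. -/
noncomputable def ellipsePoint (A B θ : ℝ) : ℝ × ℝ :=
  (A * cos θ, B * sin θ)

/-- The polar of `v` with respect to the unit circle centred at `f`. A point is a pole of the line
through `v` and `w` when it lies on the polars of both `v` and `w`. -/
def polarLine (f v : ℝ × ℝ) : Set (ℝ × ℝ) :=
  {p | (v.1 - f.1) * (p.1 - f.1) + (v.2 - f.2) * (p.2 - f.2) = 1}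

/-- The constant term of the polar of `p` with respect to the unit circle centred at `f`, when that
line is written as `{v | ⟪v, p - f⟫ = polarLevel f p}`. -/
def polarLevel (f p : ℝ × ℝ) : ℝ :=
  1 + f.1 * (p.1 - f.1) + f.2 * (p.2 - f.2)

/-- The reciprocal about `f` of the origin-centred ellipse with semiaxes `A`, `B`: the points `p`
whose polar is tangent to that ellipse. Tangency is encoded by equating the squares of the support
function of the ellipse at `p - f` and of the level of the polar. -/
def ellipseReciprocal (A B : ℝ) (f : ℝ × ℝ) : Set (ℝ × ℝ) :=
  {p | (A * (p.1 - f.1)) ^ 2 + (B * (p.2 - f.2)) ^ 2 = polarLevel f p ^ 2}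

/-- The value at `f` of the affine function `1 - x cos θ / A - y sin θ / B`, whose zero set is the
tangent at `ellipsePoint A B θ` to the ellipse with semiaxes `A`, `B`. -/
noncomputable def tangentOffset (A B : ℝ) (f : ℝ × ℝ) (θ : ℝ) : ℝ :=
  1 - f.1 * cos θ / A - f.2 * sin θ / B

/-- The pole, with respect to the unit circle centred at `f`, of the tangent at
`ellipsePoint A B θ` to the ellipse with semiaxes `A`, `B`. It takes the junk value `f` when `f`
lies on that tangent. -/
noncomputable def tangentPole (A B : ℝ) (f : ℝ × ℝ) (θ : ℝ) : ℝ × ℝ :=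
  f + (tangentOffset A B f θ)⁻¹ • (cos θ / A, sin θ / B)

lemma mem_ellipse_self_iff {x₀ R : ℝ} (hR : 0 < R) {p : ℝ × ℝ} :
    p ∈ ellipse x₀ R R ↔ √((p.1 - x₀) ^ 2 + p.2 ^ 2) = R := by
  rw [sqrt_eq_iff_eq_sq (by positivity) hR.le, ellipse, Set.mem_ofPred_eq, ← add_div,
    div_eq_one_iff_eq (pow_pos hR 2).ne']

section Polar

variable {f v p q r : ℝ × ℝ}

lemma mem_polarLine_iff :
    p ∈ polarLine f v ↔ v.1 * (p.1 - f.1) + v.2 * (p.2 - f.2) = polarLevel f p := by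
  simp only [polarLine, polarLevel, Set.mem_ofPred_eq]
  constructor <;> intro h <;> linear_combination h

lemma exists_eq_add_smul_iff_mem_polarLine (hq : q ∈ polarLine f v) (hr : r ∈ polarLine f v)
    (hqr : q ≠ r) : (∃ s : ℝ, p = q + s • (r - q)) ↔ p ∈ polarLine f v := by
  simp only [polarLine, Set.mem_ofPred_eq] at hq hr ⊢
  constructor
  · rintro ⟨s, rfl⟩
    simp only [Prod.fst_add, Prod.snd_add, Prod.smul_fst, Prod.smul_snd, Prod.fst_sub,
      Prod.snd_sub, smul_eq_mul]
    linear_combination (1 - s) * hq + s * hr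
  · intro hp
    have parallel : (p.1 - q.1) * (r.2 - q.2) = (p.2 - q.2) * (r.1 - q.1) := by
      have hpq : (v.1 - f.1) * (p.1 - q.1) + (v.2 - f.2) * (p.2 - q.2) = 0 := by
        linear_combination hp - hq
      have hrq : (v.1 - f.1) * (r.1 - q.1) + (v.2 - f.2) * (r.2 - q.2) = 0 := by
        linear_combination hr - hq
      linear_combination ((r.2 - q.2) * (q.1 - f.1) - (r.1 - q.1) * (q.2 - f.2)) * hpq
        + ((p.1 - q.1) * (q.2 - f.2) - (p.2 - q.2) * (q.1 - f.1)) * hrq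
        - ((p.1 - q.1) * (r.2 - q.2) - (p.2 - q.2) * (r.1 - q.1)) * hq
    have normSq_ne : (r.1 - q.1) ^ 2 + (r.2 - q.2) ^ 2 ≠ 0 := by
      intro h
      rw [sq, sq, mul_self_add_mul_self_eq_zero] at h
      exact hqr.symm (Prod.ext (sub_eq_zero.1 h.1) (sub_eq_zero.1 h.2))
    refine ⟨((p.1 - q.1) * (r.1 - q.1) + (p.2 - q.2) * (r.2 - q.2)) /
      ((r.1 - q.1) ^ 2 + (r.2 - q.2) ^ 2), Prod.ext ?_ ?_⟩
    · simp only [Prod.fst_add, Prod.smul_fst, Prod.fst_sub, smul_eq_mul]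
      field_simp
      linear_combination (r.2 - q.2) * parallel
    · simp only [Prod.snd_add, Prod.smul_snd, Prod.snd_sub, smul_eq_mul]
      field_simp
      linear_combination -(r.1 - q.1) * parallel

end Polar

section TangentPole

variable {A B θ φ : ℝ} {f p : ℝ × ℝ}

lemma polarLevel_mul_tangentOffset (hA : A ≠ 0) (hB : B ≠ 0)
    (hfst : A * (p.1 - f.1) = polarLevel f p * cos θ)
    (hsnd : B * (p.2 - f.2) = polarLevel f p * sin θ) :
    polarLevel f p * tangentOffset A B f θ = 1 := by
  have level : polarLevel f p = 1 + f.1 * (p.1 - f.1) + f.2 * (p.2 - f.2) := rfl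
  rw [mul_comm] at hfst hsnd
  rw [eq_div_of_mul_eq hA hfst, eq_div_of_mul_eq hB hsnd] at level
  rw [tangentOffset]
  linear_combination level

lemma eq_tangentPole (hA : A ≠ 0) (hB : B ≠ 0)
    (hfst : A * (p.1 - f.1) = polarLevel f p * cos θ)
    (hsnd : B * (p.2 - f.2) = polarLevel f p * sin θ) :
    p = tangentPole A B f θ := by
  rw [tangentPole, ← eq_inv_of_mul_eq_one_left (polarLevel_mul_tangentOffset hA hB hfst hsnd)]
  ext
  · simp only [Prod.fst_add, Prod.smul_fst, smul_eq_mul]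
    field_simp
    linear_combination hfst
  · simp only [Prod.snd_add, Prod.smul_snd, smul_eq_mul]
    field_simp
    linear_combination hsnd

lemma polarLevel_tangentPole (hθ : tangentOffset A B f θ ≠ 0) :
    polarLevel f (tangentPole A B f θ) = (tangentOffset A B f θ)⁻¹ := by
  have inv_mul := inv_mul_cancel₀ hθ
  nth_rw 2 [tangentOffset] at inv_mul
  simp only [polarLevel, tangentPole, Prod.fst_add, Prod.snd_add, Prod.smul_fst, Prod.smul_snd,
    smul_eq_mul, add_sub_cancel_left]
  linear_combination -inv_mul

lemma mul_tangentPole_fst_sub (hA : A ≠ 0) (hθ : tangentOffset A B f θ ≠ 0) :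
    A * ((tangentPole A B f θ).1 - f.1) = polarLevel f (tangentPole A B f θ) * cos θ := by
  rw [polarLevel_tangentPole hθ]
  simp only [tangentPole, Prod.fst_add, Prod.smul_fst, smul_eq_mul, add_sub_cancel_left]
  rw [mul_left_comm, mul_div_cancel₀ _ hA]

lemma mul_tangentPole_snd_sub (hB : B ≠ 0) (hθ : tangentOffset A B f θ ≠ 0) :
    B * ((tangentPole A B f θ).2 - f.2) = polarLevel f (tangentPole A B f θ) * sin θ := by
  rw [polarLevel_tangentPole hθ]
  simp only [tangentPole, Prod.snd_add, Prod.smul_snd, smul_eq_mul, add_sub_cancel_left]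
  rw [mul_left_comm, mul_div_cancel₀ _ hB]

lemma angle_eq_of_tangentPole_eq (hA : A ≠ 0) (hB : B ≠ 0) (hθ : tangentOffset A B f θ ≠ 0)
    (hφ : tangentOffset A B f φ ≠ 0) (h : tangentPole A B f θ = tangentPole A B f φ) :
    (θ : Real.Angle) = φ := by
  have level_ne : polarLevel f (tangentPole A B f θ) ≠ 0 :=
    polarLevel_tangentPole hθ ▸ inv_ne_zero hθ
  apply Real.Angle.cos_sin_inj <;> apply mul_left_cancel₀ level_ne
  · rw [← mul_tangentPole_fst_sub hA hθ, h, mul_tangentPole_fst_sub hA hφ]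
  · rw [← mul_tangentPole_snd_sub hB hθ, h, mul_tangentPole_snd_sub hB hφ]

lemma tangentPole_ne_tangentPole_add_two_mul {α : ℝ} (hA : A ≠ 0) (hB : B ≠ 0)
    (hθ : tangentOffset A B f θ ≠ 0) (hadd : tangentOffset A B f (θ + 2 * α) ≠ 0)
    (hsin : sin α ≠ 0) : tangentPole A B f θ ≠ tangentPole A B f (θ + 2 * α) := by
  intro h
  obtain ⟨n, hn⟩ := Real.Angle.angle_eq_iff_two_pi_dvd_sub.1
    (angle_eq_of_tangentPole_eq hA hB hadd hθ h.symm)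
  have hα : α = n * π := by linarith
  exact hsin (hα ▸ sin_int_mul_pi n)

lemma tangentPole_mem_ellipseReciprocal (hA : A ≠ 0) (hB : B ≠ 0)
    (hθ : tangentOffset A B f θ ≠ 0) : tangentPole A B f θ ∈ ellipseReciprocal A B f := by
  rw [ellipseReciprocal, Set.mem_ofPred_eq, mul_tangentPole_fst_sub hA hθ,
    mul_tangentPole_snd_sub hB hθ]
  linear_combination polarLevel f (tangentPole A B f θ) ^ 2 * cos_sq_add_sin_sq θ

lemma tangentPole_mem_polarLine (hA : A ≠ 0) (hB : B ≠ 0) (hθ : tangentOffset A B f θ ≠ 0) :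
    tangentPole A B f θ ∈ polarLine f (ellipsePoint A B θ) := by
  rw [mem_polarLine_iff, ellipsePoint]
  linear_combination cos θ * mul_tangentPole_fst_sub hA hθ
    + sin θ * mul_tangentPole_snd_sub hB hθ
    + polarLevel f (tangentPole A B f θ) * cos_sq_add_sin_sq θ

theorem polarLine_ellipsePoint_inter_ellipseReciprocal (hA : A ≠ 0) (hB : B ≠ 0)
    (hθ : tangentOffset A B f θ ≠ 0) :
    polarLine f (ellipsePoint A B θ) ∩ ellipseReciprocal A B f = {tangentPole A B f θ} := by
  refine Set.eq_singleton_iff_unique_mem.2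
    ⟨⟨tangentPole_mem_polarLine hA hB hθ, tangentPole_mem_ellipseReciprocal hA hB hθ⟩, ?_⟩
  rintro p ⟨hline, hconic⟩
  rw [mem_polarLine_iff, ellipsePoint] at hline
  rw [ellipseReciprocal, Set.mem_ofPred_eq] at hconic
  -- The equality case of the Cauchy-Schwarz inequality.
  have sum_sq : (A * (p.1 - f.1) - polarLevel f p * cos θ) ^ 2
      + (B * (p.2 - f.2) - polarLevel f p * sin θ) ^ 2 = 0 := by
    linear_combination hconic - 2 * polarLevel f p * hline
      + polarLevel f p ^ 2 * cos_sq_add_sin_sq θ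
  rw [sq, sq, mul_self_add_mul_self_eq_zero, sub_eq_zero, sub_eq_zero] at sum_sq
  exact eq_tangentPole hA hB sum_sq.1 sum_sq.2

lemma eq_tangentPole_of_mem_polarLine {α : ℝ} (hA : A ≠ 0) (hB : B ≠ 0) (hcos : cos α ≠ 0)
    (hsin : sin α ≠ 0)
    (hsub : p ∈ polarLine f (ellipsePoint (A / cos α) (B / cos α) (θ - α)))
    (hadd : p ∈ polarLine f (ellipsePoint (A / cos α) (B / cos α) (θ + α))) :
    p = tangentPole A B f θ := by
  simp only [mem_polarLine_iff, ellipsePoint, cos_sub, sin_sub, cos_add, sin_add] at hsub hadd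
  field_simp at hsub hadd
  have tangent : A * (p.1 - f.1) * cos θ + B * (p.2 - f.2) * sin θ = polarLevel f p :=
    mul_left_cancel₀ hcos (by linear_combination (hsub + hadd) / 2)
  have normal : A * (p.1 - f.1) * sin θ = B * (p.2 - f.2) * cos θ :=
    mul_left_cancel₀ hsin (by linear_combination (hsub - hadd) / 2)
  apply eq_tangentPole hA hB
  · linear_combination cos θ * tangent + sin θ * normal
      - A * (p.1 - f.1) * cos_sq_add_sin_sq θ
  · linear_combination sin θ * tangent - cos θ * normal
      - B * (p.2 - f.2) * cos_sq_add_sin_sq θ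

end TangentPole

section AxialCentre

variable {A B C c κ : ℝ}

lemma tangentOffset_neg_zero_pos (h : c ^ 2 < A ^ 2) (B θ : ℝ) :
    0 < tangentOffset A B (-c, 0) θ := by
  have ratio_sq_lt : (c / A) ^ 2 < 1 := by
    rwa [div_pow, div_lt_one ((sq_nonneg c).trans_lt h)]
  have offset : tangentOffset A B (-c, 0) θ = 1 + c / A * cos θ := by
    rw [tangentOffset]
    ring
  nlinarith [sq_nonneg (c / A + cos θ), cos_sq_le_one θ]

lemma ellipseReciprocal_eq_ellipse (hA : A ≠ 0) (hκ : κ ≠ 0)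
    (hκ_sq : κ ^ 2 = A ^ 2 - c ^ 2) :
    ellipseReciprocal A B (-c, 0) = ellipse (-c - c / κ ^ 2) (A / κ ^ 2) (A / (B * κ)) := by
  ext p
  simp only [ellipseReciprocal, ellipse, polarLevel, Set.mem_ofPred_eq]
  have scaled :
      (p.1 - (-c - c / κ ^ 2)) ^ 2 / (A / κ ^ 2) ^ 2 + p.2 ^ 2 / (A / (B * κ)) ^ 2 - 1 =
      κ ^ 2 / A ^ 2 * ((A * (p.1 - -c)) ^ 2 + (B * (p.2 - 0)) ^ 2
        - (1 + -c * (p.1 - -c) + 0 * (p.2 - 0)) ^ 2) := by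
    field_simp
    linear_combination (κ ^ 2 * (p.1 + c) ^ 2 + 1) * hκ_sq
  have scale_ne : κ ^ 2 / A ^ 2 ≠ 0 := by positivity
  rw [← sub_eq_zero, ← sub_eq_zero (b := (1 : ℝ)), scaled, mul_eq_zero, or_iff_right scale_ne]

lemma ellipseReciprocal_focus (hA : A ≠ 0) (hB : B ≠ 0) (hc : c ^ 2 = A ^ 2 - B ^ 2) :
    ellipseReciprocal A B (-c, 0) =
      ellipse (-c * (1 + B ^ 2) / B ^ 2) (A / B ^ 2) (A / B ^ 2) := by
  rw [ellipseReciprocal_eq_ellipse hA hB (by linarith)]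
  congr 1
  · field_simp
    ring
  · rw [sq]

lemma ellipseReciprocal_homothetic (hA : A ≠ 0) (hC : C ≠ 0) (hκ : κ ≠ 0)
    (hκ_sq : κ ^ 2 = A ^ 2 - c ^ 2 * C ^ 2) :
    ellipseReciprocal (A / C) (B / C) (-c, 0) =
      ellipse (-c * (A ^ 2 + (1 - c ^ 2) * C ^ 2) / κ ^ 2) (A * C / κ ^ 2) (A * C / (B * κ)) := by
  have hκ_div_sq : (κ / C) ^ 2 = (A / C) ^ 2 - c ^ 2 := by
    field_simp
    linarith
  rw [ellipseReciprocal_eq_ellipse (div_ne_zero hA hC) (div_ne_zero hκ hC) hκ_div_sq]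
  congr 1
  · field_simp
    linear_combination -c * hκ_sq
  · field_simp
  · field_simp

end AxialCentre

theorem polar_of_homothetic_is_harmonic_general {a b c α t κ : ℝ} (ha : 0 < a) (hb : b ≠ 0)
    (hc : c ^ 2 = a ^ 2 - b ^ 2) (hcos : cos α ≠ 0) (hsin : sin α ≠ 0)
    (hκ : κ = √(a ^ 2 - c ^ 2 * cos α ^ 2)) {v q : ℤ → ℝ × ℝ}
    (hv : ∀ k : ℤ, v k = ellipsePoint (a / cos α) (b / cos α) (2 * α * k + t))
    (hq : ∀ k : ℤ, q k ∈ polarLine (-c, 0) (v k) ∧ q k ∈ polarLine (-c, 0) (v (k + 1))) :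
    (∀ k : ℤ, √(((q k).1 - -c * (1 + b ^ 2) / b ^ 2) ^ 2 + (q k).2 ^ 2) = a / b ^ 2) ∧
    (∀ k : ℤ, ∃! p : ℝ × ℝ, (∃ s : ℝ, p = q k + s • (q (k + 1) - q k)) ∧
      p ∈ ellipse (-c * (a ^ 2 + (1 - c ^ 2) * cos α ^ 2) / κ ^ 2) (a * cos α / κ ^ 2)
        (a * cos α / (b * κ))) := by
  have radicand_pos : 0 < a ^ 2 - c ^ 2 * cos α ^ 2 := by
    have : a ^ 2 - c ^ 2 * cos α ^ 2 = b ^ 2 + (c * sin α) ^ 2 := by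
      linear_combination -hc - c ^ 2 * cos_sq_add_sin_sq α
    rw [this]
    positivity
  have hκ_ne : κ ≠ 0 := hκ ▸ (sqrt_pos.2 radicand_pos).ne'
  have hκ_sq : κ ^ 2 = a ^ 2 - c ^ 2 * cos α ^ 2 := hκ ▸ sq_sqrt radicand_pos.le
  have inner_offset (θ : ℝ) : tangentOffset a b (-c, 0) θ ≠ 0 :=
    (tangentOffset_neg_zero_pos (by linarith [sq_pos_of_ne_zero hb]) b θ).ne'
  have c_sq_lt_outer : c ^ 2 < (a / cos α) ^ 2 := by
    rw [div_pow, lt_div_iff₀ (by positivity)]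
    linarith
  have outer_offset (θ : ℝ) : tangentOffset (a / cos α) (b / cos α) (-c, 0) θ ≠ 0 :=
    (tangentOffset_neg_zero_pos c_sq_lt_outer _ θ).ne'
  have q_eq (k : ℤ) : q k = tangentPole a b (-c, 0) (2 * α * k + t + α) := by
    obtain ⟨hsub, hadd⟩ := hq k
    rw [hv] at hsub hadd
    refine eq_tangentPole_of_mem_polarLine ha.ne' hb hcos hsin ?_ ?_
    · rwa [add_sub_cancel_right]
    · convert hadd using 3
      push_cast
      ring
  refine ⟨fun k => ?_, fun k => ?_⟩
  · rw [← mem_ellipse_self_iff (by positivity), ← ellipseReciprocal_focus ha.ne' hb hc, q_eq]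
    exact tangentPole_mem_ellipseReciprocal ha.ne' hb (inner_offset _)
  · have q_ne : q k ≠ q (k + 1) := by
      rw [q_eq, q_eq]
      convert tangentPole_ne_tangentPole_add_two_mul ha.ne' hb (inner_offset _)
        (inner_offset (2 * α * k + t + α + 2 * α)) hsin using 2
      push_cast
      ring
    simp only [exists_eq_add_smul_iff_mem_polarLine (hq k).2 (hq (k + 1)).1 q_ne,
      ← ellipseReciprocal_homothetic ha.ne' hcos hκ_ne hκ_sq, ← Set.mem_inter_iff, hv,
      polarLine_ellipsePoint_inter_ellipseReciprocal (div_ne_zero ha.ne' hcos)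
        (div_ne_zero hb hcos) (outer_offset _), Set.mem_singleton_iff, existsUnique_eq]

lemma cos_pi_div_natCast_pos {N : ℕ} (hN : 3 ≤ N) : 0 < cos (π / N) := by
  have hN' : (2 : ℝ) < N := by exact_mod_cast hN
  refine cos_pos_of_mem_Ioo ⟨by linarith [pi_pos, show 0 < π / N by positivity], ?_⟩
  exact div_lt_div_of_pos_left pi_pos two_pos hN'

lemma sin_pi_div_natCast_pos {N : ℕ} (hN : 2 ≤ N) : 0 < sin (π / N) := by
  have hN' : (1 : ℝ) < N := by exact_mod_cast hN
  exact sin_pos_of_pos_of_lt_pi (by positivity) (div_lt_self pi_pos hN')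

/-- The polar image of the Poncelet homothetic family with respect to the unit
circle centered at a focus `f_h = (−c_h, 0)` of the inner ellipse is a harmonic
family: the poles `q_k` of the sides lie on the circle of center
`O_1 = (−c_h(1 + b_h²)/b_h², 0)` and radius `R_1 = a_h/b_h²`, and the lines
through consecutive poles are tangent to the stated ellipse. -/
theorem polar_of_homothetic_is_harmonic (N : ℕ) (hN : 3 ≤ N)
    (ah bh t : ℝ) (hab : bh < ah) (hb : 0 < bh)
    (ch : ℝ) (hch : ch = Real.sqrt (ah ^ 2 - bh ^ 2))
    (v : ℤ → ℝ × ℝ)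
    (hv : ∀ k : ℤ, v k =
      ((ah / Real.cos (Real.pi / N)) * Real.cos (2 * (Real.pi / N) * (k : ℝ) + t),
       (bh / Real.cos (Real.pi / N)) * Real.sin (2 * (Real.pi / N) * (k : ℝ) + t)))
    (fh : ℝ × ℝ) (hfh : fh = (-ch, 0))
    (q : ℤ → ℝ × ℝ)
    (hq : ∀ k : ℤ,
      ((v k).1 - fh.1) * ((q k).1 - fh.1) + ((v k).2 - fh.2) * ((q k).2 - fh.2) = 1 ∧
      ((v (k + 1)).1 - fh.1) * ((q k).1 - fh.1) + ((v (k + 1)).2 - fh.2) * ((q k).2 - fh.2) = 1)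
    (O1 : ℝ × ℝ) (hO1 : O1 = (-ch * (1 + bh ^ 2) / bh ^ 2, 0))
    (R1 : ℝ) (hR1 : R1 = ah / bh ^ 2)
    (κ x1 a1 b1 : ℝ)
    (hκ : κ = Real.sqrt (ah ^ 2 - ch ^ 2 * Real.cos (Real.pi / N) ^ 2))
    (hx1 : x1 = -ch * (ah ^ 2 + (1 - ch ^ 2) * Real.cos (Real.pi / N) ^ 2) / κ ^ 2)
    (ha1 : a1 = ah * Real.cos (Real.pi / N) / κ ^ 2)
    (hb1 : b1 = ah * Real.cos (Real.pi / N) / (bh * κ)) :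
    (∀ k : ℤ, Real.sqrt (((q k).1 - O1.1) ^ 2 + ((q k).2 - O1.2) ^ 2) = R1) ∧
    (∀ k : ℤ, ∃! p : ℝ × ℝ,
      (∃ s : ℝ, p = q k + s • (q (k + 1) - q k)) ∧
      (p.1 - x1) ^ 2 / a1 ^ 2 + p.2 ^ 2 / b1 ^ 2 = 1) := by
  have hc : ch ^ 2 = ah ^ 2 - bh ^ 2 := hch ▸ sq_sqrt (by nlinarith)
  subst hfh hO1 hR1 hx1 ha1 hb1
  simpa only [sub_zero, ellipse, Set.mem_ofPred_eq] using
    polar_of_homothetic_is_harmonic_general (hb.trans hab) hb.ne' hc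
      (cos_pi_div_natCast_pos hN).ne' (sin_pi_div_natCast_pos (Nat.le_of_succ_le hN)).ne'
      hκ hv hq
end
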